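/- For every tour σ on {1,…,r} with incidence vector x and positions u, the 2PATH inequality u_k − u_i + (2r−7)·x_{ik} + (r−1)·x_{ki} + (r−4)(x_{ij} + x_{jk}) ≤ 2r − 6 holds for all pairwise distinct i, j, k ∈ {2,…,r}. -/

import Mathlib

/-- A tour on the node set `Fin r`: a permutation consisting of a single cycle
through all `r` nodes. -/
def IsTour {r : ℕ} (σ : Equiv.Perm (Fin r)) : Prop :=
  σ.IsCycle ∧ ∀ i, σ i ≠ i

/-- The incidence vector of a tour `σ`: `x i j = 1` iff `j = σ i`. -/
def incidence {r : ℕ} (σ : Equiv.Perm (Fin r)) (i j : Fin r) : ℝ :=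
  if σ i = j then 1 else 0

/-- `u` gives the positions of the nodes along the tour `σ`: `u i` is the
(unique) integer in `{1, …, r}` with `σ^(u i − 1) 1 = i` (node `1` is index `0`). -/
def IsPositions {r : ℕ} [NeZero r] (σ : Equiv.Perm (Fin r)) (u : Fin r → ℕ) : Prop :=
  ∀ i, 1 ≤ u i ∧ u i ≤ r ∧ (σ ^ (u i - 1)) (0 : Fin r) = i

theorem pos_succ {r : ℕ} [NeZero r] (σ : Equiv.Perm (Fin r))
    (u : Fin r → ℕ) (hu : IsPositions σ u) (a b : Fin r) (hb : b ≠ 0) (h : σ a = b) :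
    u b = u a + 1 := by
  have hinj : Function.Injective u := by
    intro x y hxy
    rw [← (hu x).2.2, ← (hu y).2.2, hxy]
  have himg : Finset.univ.image u = Finset.Icc 1 r := by
    apply Finset.eq_of_subset_of_card_le
    · intro n hn
      obtain ⟨x, -, rfl⟩ := Finset.mem_image.1 hn
      exact Finset.mem_Icc.2 ⟨(hu x).1, (hu x).2.1⟩
    · rw [Finset.card_image_of_injective _ hinj]
      simp
  obtain ⟨h1, h2, h3⟩ := hu b
  have hb2 : u b ≠ 1 := by
    intro h4
    rw [h4] at h3
    exact hb (by simpa using h3.symm)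
  have hm : u b - 1 ∈ Finset.univ.image u := by
    rw [himg, Finset.mem_Icc]; omega
  obtain ⟨c, -, hc⟩ := Finset.mem_image.1 hm
  have hc3 := (hu c).2.2
  have e : u b - 1 = (u c - 1) + 1 := by omega
  rw [e, pow_succ', Equiv.Perm.mul_apply, hc3, ← h] at h3
  have := σ.injective h3
  subst this
  omega

theorem two_path_reverse_valid (r : ℕ) [NeZero r] (hr : 4 ≤ r)
    (σ : Equiv.Perm (Fin r)) (hσ : IsTour σ)
    (u : Fin r → ℕ) (hu : IsPositions σ u)
    (i j k : Fin r) (hi : i ≠ 0) (hj : j ≠ 0) (hk : k ≠ 0)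
    (hij : i ≠ j) (hik : i ≠ k) (hjk : j ≠ k) :
    (u k : ℝ) - (u i : ℝ) + (2 * (r : ℝ) - 7) * incidence σ i k
      + ((r : ℝ) - 1) * incidence σ k i
      + ((r : ℝ) - 4) * (incidence σ i j + incidence σ j k)
      ≤ 2 * (r : ℝ) - 6 := by
  have S := pos_succ σ u hu
  have two : ∀ b, b ≠ 0 → 2 ≤ u b := by
    intro b hb
    obtain ⟨h1, h2, h3⟩ := hu b
    by_contra h4
    have h5 : u b = 1 := by omega
    rw [h5] at h3
    exact hb (by simpa using h3.symm)
  have bi : (2 : ℝ) ≤ u i := by exact_mod_cast two i hi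
  have bk : (u k : ℝ) ≤ r := by exact_mod_cast (hu k).2.1
  have hr' : (4 : ℝ) ≤ r := by exact_mod_cast hr
  have S' : ∀ a b, b ≠ 0 → σ a = b → (u b : ℝ) = u a + 1 := by
    intro a b hb h
    exact_mod_cast S a b hb h
  have Iij := S' i j hj
  have Ijk := S' j k hk
  have Iik := S' i k hk
  have Iki := S' k i hi
  unfold incidence
  by_cases h1 : σ i = k
  · have h2 : σ i ≠ j := fun h => hjk (h.symm.trans h1)
    have h3 : σ j ≠ k := fun h => hij (σ.injective (h1.trans h.symm))
    have h4 : σ k ≠ i := fun h => by linarith [Iik h1, Iki h]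
    simp only [h1, h3, h4, hjk.symm, if_true, if_false]
    linarith [Iik h1]
  · by_cases h2 : σ k = i <;> by_cases h3 : σ i = j <;> by_cases h4 : σ j = k <;>
      simp only [h1, h2, h3, h4, hjk, if_true, if_false] <;>
      simp only [h1, h2, h3, h4, forall_const] at Iij Ijk Iki <;> linarith
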